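/- Let ‖·‖ be a norm on ℝ^n all of whose unit-ball extreme points a ∈ G satisfy ‖a‖_u = 1. Suppose that for every x ∈ ℝ^n \ {0} and every a₁ ∈ argmax_{a ∈ G} ⟨a, x⟩ there exist a₂, …, a_k ∈ G such that {a₁, …, a_k} is an orthogonal set (with respect to ⟨·,·⟩) satisfying: (I) there exist γ₁, …, γ_k > 0 with x = Σ_{i=1}^k γᵢ aᵢ and ‖x‖ = Σ_{i=1}^k γᵢ; and (II) for every choice of scalars η₁, …, η_k with |ηᵢ| ≤ 1, one has ‖Σ_{i=1}^k ηᵢ aᵢ‖* ≤ 1. Then ‖·‖ is decomposable, and for any x with such a representation, e_x = Σ_{i=1}^k aᵢ. -/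

import Mathlib

/-!
Write `e = ∑ aᵢ` for a representation of `x` as in (I) and (II); for `x = 0` it is empty. Since
`∂N(x)` consists of the `ξ` in the dual ball with `⟪ξ, x⟫ = N x`, the vector `e` is a subgradient,
and every `ξ ∈ ∂N(x)` satisfies `⟪ξ, aᵢ⟫ = 1` for all `i`. This makes `e` independent of the
representation (`Rep.sum_unique`). Let `C = ∂N(x) - e`, a convex set orthogonal to all `aᵢ`, and
take `T = Cᗮ`, so that `Tᗮ = span C`.

The hypothesis is also applied to vectors `w` of the dual ball: if `a` is an extreme point with
`⟪a, w⟫ = 1`, then `a` is a maximizer, so `w = ∑ δⱼ bⱼ` with (II), `b₀ = a`, `δ₀ = 1` and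
`δⱼ = ⟪bⱼ, w⟫ ≤ 1` (`Expands`).

* For `w = e + v` with `v ∈ C` and `a = aᵢ`, (II) allows the coefficient of `aᵢ` to be changed to
  anything in `[-1, 1]`. Doing this for one `i` after the other (`Expands.flip`) shows that
  `‖v‖* ≤ 1` and that `C = -C`; hence `span C` is the set of multiples of elements of `C`.
* Conversely, let `v ∈ span C` with `‖v‖* ≤ 1`, and let `u = s⁻¹ v ∈ C` with `s > 1`
  (`Expands.extend`). Expand `e + u` along a frame and split it as `E + R`, where `E` is the sum of
  the `bⱼ` with `δⱼ = 1`. All `aᵢ` are orthogonal to the remaining `bⱼ`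
  (`Frame.orth_of_coef_lt`), so they can be peeled off from `E` (`Expands.peel_frame`), and
  `E - e = ∑ cₗ` for another frame `c`. Each `cₗ` would satisfy `⟪cₗ, u⟫ = 1`, contradicting
  `‖u‖* ≤ s⁻¹ < 1`. So `c` is empty, `E = e` and `u = R`, and `e + v = E + s R` has all its
  coefficients in `[0, 1]`, which gives `e + v ∈ ∂N(x)`.
-/

open Matrix

namespace PGH

variable {n m : ℕ}

/-- The inner product `⟪x, y⟫ = xᵀ B y` on `ℝⁿ` induced by a matrix `B`. -/
def ip (B : Matrix (Fin n) (Fin n) ℝ) (x y : Fin n → ℝ) : ℝ :=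
  dotProduct x (B.mulVec y)

/-- The norm `‖x‖ᵤ = √(xᵀ B x)` induced by the inner product. -/
noncomputable def normu (B : Matrix (Fin n) (Fin n) ℝ) (x : Fin n → ℝ) : ℝ :=
  Real.sqrt (ip B x x)

/-- `N` is a norm on `ℝⁿ`. -/
structure IsNorm (N : (Fin n → ℝ) → ℝ) : Prop where
  nonneg : ∀ x, 0 ≤ N x
  eq_zero_iff : ∀ x, N x = 0 ↔ x = 0
  triangle : ∀ x y, N (x + y) ≤ N x + N y
  smul_eq : ∀ (c : ℝ) (x), N (c • x) = |c| * N x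

/-- The dual norm `‖y‖* = sup {⟪y, x⟫ : N x ≤ 1}`. -/
noncomputable def dualNorm (B : Matrix (Fin n) (Fin n) ℝ) (N : (Fin n → ℝ) → ℝ)
    (y : Fin n → ℝ) : ℝ :=
  sSup ((fun x => ip B y x) '' {x | N x ≤ 1})

/-- The subdifferential of `N` at `x` with respect to `⟪·,·⟫`. -/
def subdiff (B : Matrix (Fin n) (Fin n) ℝ) (N : (Fin n → ℝ) → ℝ) (x : Fin n → ℝ) :
    Set (Fin n → ℝ) :=
  {z | ∀ y, N x + ip B z (y - x) ≤ N y}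

/-- The set `G` of extreme points of the unit ball of `N`. -/
def extPts (N : (Fin n → ℝ) → ℝ) : Set (Fin n → ℝ) :=
  Set.extremePoints ℝ {x | N x ≤ 1}

/-- The orthogonal complement (w.r.t. `⟪·,·⟫`) of a subspace `T`, as a set. -/
def perp (B : Matrix (Fin n) (Fin n) ℝ) (T : Submodule ℝ (Fin n → ℝ)) :
    Set (Fin n → ℝ) :=
  {v | ∀ u ∈ T, ip B u v = 0}

/-- A decomposability structure for the norm `N`: for every `x` there are a subspace `T x`
and a vector `e x ∈ T x` with `∂N(x) = {e x + v : v ∈ (T x)ᗮ, ‖v‖* ≤ 1}`. -/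
structure DecompStruct (B : Matrix (Fin n) (Fin n) ℝ) (N : (Fin n → ℝ) → ℝ) where
  T : (Fin n → ℝ) → Submodule ℝ (Fin n → ℝ)
  e : (Fin n → ℝ) → (Fin n → ℝ)
  e_mem : ∀ x, e x ∈ T x
  subdiff_eq : ∀ x, subdiff B N x =
    {ξ | ∃ v ∈ perp B (T x), dualNorm B N v ≤ 1 ∧ ξ = e x + v}

/-- `K x = ‖e x‖ᵤ²`. -/
noncomputable def Kfun (B : Matrix (Fin n) (Fin n) ℝ) (N : (Fin n → ℝ) → ℝ)
    (D : DecompStruct B N) (x : Fin n → ℝ) : ℝ :=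
  (normu B (D.e x)) ^ 2

/-- Squared Euclidean norm `‖v‖₂²` on `ℝᵐ`. -/
def sq2 (v : Fin m → ℝ) : ℝ := dotProduct v v

/-- The least-squares loss `f(x) = ½ ‖A x - b‖₂²`. -/
noncomputable def fls (A : Matrix (Fin m) (Fin n) ℝ) (b : Fin m → ℝ) (x : Fin n → ℝ) : ℝ :=
  (1 / 2) * sq2 (A.mulVec x - b)

/-- The adjoint `A* = B⁻¹ Aᵀ` of `A` w.r.t. `⟪·,·⟫`. -/
noncomputable def Astar (B : Matrix (Fin n) (Fin n) ℝ) (A : Matrix (Fin m) (Fin n) ℝ) :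
    Matrix (Fin n) (Fin m) ℝ := B⁻¹ * Aᵀ

/-- The gradient `∇f(x) = A*(A x - b)` of the least-squares loss w.r.t. `⟪·,·⟫`. -/
noncomputable def gradf (B : Matrix (Fin n) (Fin n) ℝ) (A : Matrix (Fin m) (Fin n) ℝ)
    (b : Fin m → ℝ) (x : Fin n → ℝ) : Fin n → ℝ :=
  (Astar B A).mulVec (A.mulVec x - b)

/-- `ρ` is a valid lower restricted isometry constant of `A` at level `k`. -/
def IsLowerRIP (B : Matrix (Fin n) (Fin n) ℝ) (N : (Fin n → ℝ) → ℝ)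
    (A : Matrix (Fin m) (Fin n) ℝ) (k ρ : ℝ) : Prop :=
  0 < ρ ∧ ∀ x : Fin n → ℝ, (N x) ^ 2 ≤ k * (normu B x) ^ 2 →
    ρ * (normu B x) ^ 2 ≤ sq2 (A.mulVec x)

/-- `ρ` is a valid upper restricted isometry constant of `A` at level `k`. -/
def IsUpperRIP (B : Matrix (Fin n) (Fin n) ℝ) (N : (Fin n → ℝ) → ℝ)
    (A : Matrix (Fin m) (Fin n) ℝ) (k ρ : ℝ) : Prop :=
  0 < ρ ∧ ∀ x : Fin n → ℝ, (N x) ^ 2 ≤ k * (normu B x) ^ 2 →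
    sq2 (A.mulVec x) ≤ ρ * (normu B x) ^ 2

/-- The regularized objective `φ_λ(x) = f(x) + λ N(x)`. -/
noncomputable def phi (A : Matrix (Fin m) (Fin n) ℝ) (b : Fin m → ℝ)
    (N : (Fin n → ℝ) → ℝ) (lam : ℝ) (x : Fin n → ℝ) : ℝ :=
  fls A b x + lam * N x

/-- The proximal model `m_{λ,L}(y, x)`. -/
noncomputable def mdl (B : Matrix (Fin n) (Fin n) ℝ) (A : Matrix (Fin m) (Fin n) ℝ)
    (b : Fin m → ℝ) (N : (Fin n → ℝ) → ℝ) (lam L : ℝ) (y x : Fin n → ℝ) : ℝ :=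
  fls A b y + ip B (gradf B A b y) (x - y) + (L / 2) * (normu B (x - y)) ^ 2 + lam * N x

/-- `xp = Prox_{λ,L}(y)`, i.e. `xp` minimizes `m_{λ,L}(y, ·)`. -/
def IsProx (B : Matrix (Fin n) (Fin n) ℝ) (A : Matrix (Fin m) (Fin n) ℝ)
    (b : Fin m → ℝ) (N : (Fin n → ℝ) → ℝ) (lam L : ℝ) (y xp : Fin n → ℝ) : Prop :=
  ∀ u, mdl B A b N lam L y xp ≤ mdl B A b N lam L y u

/-- `ω_λ(x) = min_{ξ ∈ ∂N(x)} ‖λ ξ + ∇f(x)‖*`. -/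
noncomputable def omega (B : Matrix (Fin n) (Fin n) ℝ) (A : Matrix (Fin m) (Fin n) ℝ)
    (b : Fin m → ℝ) (N : (Fin n → ℝ) → ℝ) (lam : ℝ) (x : Fin n → ℝ) : ℝ :=
  sInf ((fun ξ => dualNorm B N (lam • ξ + gradf B A b x)) '' subdiff B N x)

/-- Assumption 1 of the paper, phrased for given valid restricted isometry constants
`ρlow = ρ₋(A, c k₀ (1+γ)²)`, `ρlow2 = ρ₋(A, 72 r c k₀ (1+γ) γinc)` and
`ρup2 = ρ₊(A, 72 r c k₀ (1+γ) γinc)`. -/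
def Assumption1 (B : Matrix (Fin n) (Fin n) ℝ) (N : (Fin n → ℝ) → ℝ)
    (A : Matrix (Fin m) (Fin n) ℝ) (z : Fin m → ℝ)
    (c k₀ γinc lamtgt r δ γ ρlow ρlow2 ρup2 : ℝ) : Prop :=
  dualNorm B N ((Astar B A).mulVec z) ≤ lamtgt / 4 ∧
  1 < r ∧ 0 < δ ∧ δ ≤ 1 / 4 ∧
  γ = (lamtgt * (1 + δ) + dualNorm B N ((Astar B A).mulVec z)) /
      (lamtgt * (1 - δ) - dualNorm B N ((Astar B A).mulVec z)) ∧
  IsLowerRIP B N A (c * k₀ * (1 + γ) ^ 2) ρlow ∧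
  IsLowerRIP B N A (72 * r * c * k₀ * (1 + γ) * γinc) ρlow2 ∧
  IsUpperRIP B N A (72 * r * c * k₀ * (1 + γ) * γinc) ρup2 ∧
  ρlow / ρup2 > c / r

/-- One backtracking step: `M` is the smallest element of `{Lt γinc^j : j ≥ 0}`
for which the proximal point is accepted, and `xt1` is that proximal point. -/
def BacktrackMin (B : Matrix (Fin n) (Fin n) ℝ) (A : Matrix (Fin m) (Fin n) ℝ)
    (b : Fin m → ℝ) (N : (Fin n → ℝ) → ℝ) (lam γinc Lt : ℝ)
    (xt : Fin n → ℝ) (M : ℝ) (xt1 : Fin n → ℝ) : Prop :=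
  (∃ j : ℕ, M = Lt * γinc ^ j) ∧
  IsProx B A b N lam M xt xt1 ∧
  phi A b N lam xt1 ≤ mdl B A b N lam M xt xt1 ∧
  ∀ j : ℕ, Lt * γinc ^ j < M →
    ∀ u, IsProx B A b N lam (Lt * γinc ^ j) xt u →
      ¬ phi A b N lam u ≤ mdl B A b N lam (Lt * γinc ^ j) xt u

/-- The iterates of the proximal-gradient subroutine with backtracking. -/
structure ProxGradSeq (B : Matrix (Fin n) (Fin n) ℝ) (A : Matrix (Fin m) (Fin n) ℝ)
    (b : Fin m → ℝ) (N : (Fin n → ℝ) → ℝ) (lam γinc γdec Lmin : ℝ)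
    (x : ℕ → Fin n → ℝ) (L M : ℕ → ℝ) : Prop where
  step : ∀ t, BacktrackMin B A b N lam γinc (L t) (x t) (M (t + 1)) (x (t + 1))
  Lupdate : ∀ t, L (t + 1) = max Lmin (M (t + 1) / γdec)

/-- The quantity `‖M (x⁻ - x) + ∇f(x) - ∇f(x⁻)‖*` used in the stopping criterion. -/
noncomputable def stopQ (B : Matrix (Fin n) (Fin n) ℝ) (A : Matrix (Fin m) (Fin n) ℝ)
    (b : Fin m → ℝ) (N : (Fin n → ℝ) → ℝ) (Mt : ℝ) (xprev xcur : Fin n → ℝ) : ℝ :=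
  dualNorm B N (Mt • (xprev - xcur) + (gradf B A b xcur - gradf B A b xprev))


section Aux

variable {B : Matrix (Fin n) (Fin n) ℝ} {N : (Fin n → ℝ) → ℝ}

/-! ### Bilinear algebra of `ip` -/

theorem ip_add_left (x y z : Fin n → ℝ) : ip B (x + y) z = ip B x z + ip B y z := by
  simp [ip]

theorem ip_add_right (x y z : Fin n → ℝ) : ip B x (y + z) = ip B x y + ip B x z := by
  simp [ip, Matrix.mulVec_add]

theorem ip_smul_left (c : ℝ) (x z : Fin n → ℝ) : ip B (c • x) z = c * ip B x z := by
  simp [ip]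

theorem ip_smul_right (c : ℝ) (x z : Fin n → ℝ) : ip B x (c • z) = c * ip B x z := by
  simp [ip, Matrix.mulVec_smul]

theorem ip_neg_left (x z : Fin n → ℝ) : ip B (-x) z = -ip B x z := by
  simp [ip]

theorem ip_sub_left (x y z : Fin n → ℝ) : ip B (x - y) z = ip B x z - ip B y z := by
  simp [ip]

theorem ip_sub_right (x y z : Fin n → ℝ) : ip B x (y - z) = ip B x y - ip B x z := by
  simp [ip, Matrix.mulVec_sub]

theorem ip_neg_right (x z : Fin n → ℝ) : ip B x (-z) = -ip B x z := by
  simp [ip, Matrix.mulVec_neg]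

theorem ip_zero_left (z : Fin n → ℝ) : ip B 0 z = 0 := by
  simp [ip]

theorem ip_zero_right (x : Fin n → ℝ) : ip B x 0 = 0 := by
  simp [ip]

theorem ip_sum_left {ι : Type*} (s : Finset ι) (f : ι → Fin n → ℝ) (z : Fin n → ℝ) :
    ip B (∑ i ∈ s, f i) z = ∑ i ∈ s, ip B (f i) z := by
  classical
  induction s using Finset.induction_on with
  | empty => simp [ip_zero_left]
  | insert j s hj ih => rw [Finset.sum_insert hj, Finset.sum_insert hj, ip_add_left, ih]

theorem ip_sum_right {ι : Type*} (s : Finset ι) (f : ι → Fin n → ℝ) (z : Fin n → ℝ) :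
    ip B z (∑ i ∈ s, f i) = ∑ i ∈ s, ip B z (f i) := by
  classical
  induction s using Finset.induction_on with
  | empty => simp [ip_zero_right]
  | insert j s hj ih => rw [Finset.sum_insert hj, Finset.sum_insert hj, ip_add_right, ih]

theorem ip_comm (hB : B.PosDef) (x y : Fin n → ℝ) : ip B x y = ip B y x := by
  have h : Bᵀ = B := by simpa using hB.isHermitian.eq
  unfold ip
  rw [Matrix.dotProduct_mulVec, ← Matrix.mulVec_transpose, h, dotProduct_comm]

theorem ip_self_pos (hB : B.PosDef) {x : Fin n → ℝ} (hx : x ≠ 0) : 0 < ip B x x := by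
  simpa [ip] using hB.dotProduct_mulVec_pos hx

theorem eq_zero_of_ip_self (hB : B.PosDef) {x : Fin n → ℝ} (hx : ip B x x = 0) : x = 0 := by
  by_contra h
  exact (ip_self_pos hB h).ne' hx

/-! ### Topology of the unit ball and the dual ball -/

theorem IsNorm.convexOn (hN : IsNorm N) : ConvexOn ℝ Set.univ N := by
  refine ⟨convex_univ, fun x _ y _ a b ha hb _ => ?_⟩
  refine (hN.triangle _ _).trans ?_
  simp [hN.smul_eq, abs_of_nonneg ha, abs_of_nonneg hb]

theorem IsNorm.continuous (hN : IsNorm N) : Continuous N :=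
  hN.convexOn.locallyLipschitz.continuous

theorem IsNorm.zero (hN : IsNorm N) : N 0 = 0 := (hN.eq_zero_iff 0).2 rfl

theorem IsNorm.isCompact_ball (hN : IsNorm N) : IsCompact {x | N x ≤ 1} := by
  obtain ⟨c, hc, hcN⟩ : ∃ c > 0, ∀ x, c * ‖x‖ ≤ N x := by
    rcases (Metric.sphere (0 : Fin n → ℝ) 1).eq_empty_or_nonempty with h | h
    · refine ⟨1, one_pos, fun x => ?_⟩
      have hx : x = 0 := by
        by_contra hx
        have : ‖x‖⁻¹ • x ∈ Metric.sphere (0 : Fin n → ℝ) 1 := by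
          simp [norm_smul, hx]
        simp [h] at this
      simp [hx, hN.zero]
    · obtain ⟨y, hy, hmin⟩ :=
        (isCompact_sphere (0 : Fin n → ℝ) 1).exists_isMinOn h hN.continuous.continuousOn
      have hy0 : y ≠ 0 := by
        rintro rfl
        simp at hy
      refine ⟨N y, lt_of_le_of_ne (hN.nonneg y) fun h0 => hy0 ((hN.eq_zero_iff y).1 h0.symm),
        fun x => ?_⟩
      by_cases hx : x = 0
      · simp [hx, hN.zero]
      · have hm : ‖x‖⁻¹ • x ∈ Metric.sphere (0 : Fin n → ℝ) 1 := by
          simp [norm_smul, hx]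
        have h1 : N y ≤ N (‖x‖⁻¹ • x) := hmin hm
        have hpos : 0 < ‖x‖ := norm_pos_iff.2 hx
        rw [hN.smul_eq, abs_of_pos (inv_pos.2 hpos), inv_mul_eq_div, le_div_iff₀ hpos] at h1
        exact h1
  refine Metric.isCompact_of_isClosed_isBounded
    (isClosed_le hN.continuous continuous_const) ?_
  refine (Metric.isBounded_closedBall (x := (0 : Fin n → ℝ)) (r := c⁻¹)).subset fun x hx => ?_
  rw [mem_closedBall_zero_iff, ← one_div, le_div_iff₀ hc, mul_comm]
  exact (hcN x).trans hx

/-- The linear functional `⟪·, x⟫` is maximized over the unit ball at an extreme point, because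
the face of its maximizers is compact and exposed. -/
theorem exists_extPts_max (hB : B.PosDef) (hN : IsNorm N) (x : Fin n → ℝ) :
    ∃ a ∈ extPts N, ∀ y, N y ≤ 1 → ip B y x ≤ ip B a x := by
  set l : StrongDual ℝ (Fin n → ℝ) :=
    LinearMap.toContinuousLinearMap (Matrix.toBilin' B x) with hl
  have hlx : ∀ y, l y = ip B y x := fun y => by
    rw [ip_comm hB]
    simp [hl, Matrix.toBilin'_apply', ip]
  have hne : {y | N y ≤ 1}.Nonempty := ⟨0, by simp [hN.zero]⟩
  obtain ⟨m, hm, hmax⟩ := hN.isCompact_ball.exists_isMaxOn hne l.continuous.continuousOn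
  have hexp : IsExposed ℝ {y | N y ≤ 1} (l.toExposed {y | N y ≤ 1}) :=
    ContinuousLinearMap.toExposed.isExposed
  obtain ⟨a, ha⟩ := (hexp.isCompact hN.isCompact_ball).extremePoints_nonempty
    ⟨m, hm, fun y hy => hmax hy⟩
  refine ⟨a, hexp.isExtreme.extremePoints_subset_extremePoints ha, fun y hy => ?_⟩
  rw [← hlx, ← hlx]
  exact (extremePoints_subset ha).2 y hy

/-- Membership in the dual unit ball, written without a supremum. -/
def InDual (B : Matrix (Fin n) (Fin n) ℝ) (N : (Fin n → ℝ) → ℝ) (y : Fin n → ℝ) : Prop :=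
  ∀ x, ip B y x ≤ N x

theorem inDual_of_ball (hN : IsNorm N) {y : Fin n → ℝ}
    (h : ∀ x, N x ≤ 1 → ip B y x ≤ 1) : InDual B N y := by
  intro x
  by_cases hx : x = 0
  · simp [hx, hN.zero, ip_zero_right]
  · have hpos : 0 < N x :=
      lt_of_le_of_ne (hN.nonneg x) fun h0 => hx ((hN.eq_zero_iff x).1 h0.symm)
    have h1 := h ((N x)⁻¹ • x) (by
      rw [hN.smul_eq, abs_of_pos (inv_pos.2 hpos), inv_mul_cancel₀ hpos.ne'])
    rwa [ip_smul_right, inv_mul_eq_div, div_le_one hpos] at h1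

theorem dualNorm_le_one_iff (hN : IsNorm N) (y : Fin n → ℝ) :
    dualNorm B N y ≤ 1 ↔ InDual B N y := by
  have hcont : Continuous fun x => ip B y x :=
    (LinearMap.toContinuousLinearMap (Matrix.toBilin' B y)).continuous.congr fun x => by
      simp [Matrix.toBilin'_apply', ip]
  constructor
  · intro h
    refine inDual_of_ball hN fun x hx => le_trans ?_ h
    exact le_csSup (hN.isCompact_ball.image hcont).bddAbove ⟨x, hx, rfl⟩
  · intro h
    refine csSup_le ⟨_, 0, by simp [hN.zero], rfl⟩ ?_
    rintro _ ⟨x, hx, rfl⟩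
    exact (h x).trans hx

theorem mem_subdiff_iff (hN : IsNorm N) (x z : Fin n → ℝ) :
    z ∈ subdiff B N x ↔ InDual B N z ∧ ip B z x = N x := by
  constructor
  · intro h
    have h0 := h 0
    have h2 := h ((2 : ℝ) • x)
    rw [hN.zero, ip_sub_right, ip_zero_right] at h0
    rw [hN.smul_eq, ip_sub_right, ip_smul_right, abs_of_pos two_pos] at h2
    have he : ip B z x = N x := by linarith
    refine ⟨fun y => ?_, he⟩
    have hy := h y
    rw [ip_sub_right] at hy
    linarith
  · rintro ⟨h, he⟩ y
    have hy := h y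
    rw [ip_sub_right]
    linarith

end Aux

section Frames

variable {B : Matrix (Fin n) (Fin n) ℝ} {N : (Fin n → ℝ) → ℝ}

/-! ### Orthogonal frames of extreme points -/

/-- An orthogonal family of extreme points, each of unit `‖·‖ᵤ`-norm, all of whose combinations
with coefficients in `[-1, 1]` lie in the dual unit ball. -/
structure Frame (B : Matrix (Fin n) (Fin n) ℝ) (N : (Fin n → ℝ) → ℝ) {ι : Type} [Fintype ι]
    (b : ι → Fin n → ℝ) : Prop where
  mem : ∀ i, b i ∈ extPts N
  self : ∀ i, ip B (b i) (b i) = 1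
  orth : ∀ i j, i ≠ j → ip B (b i) (b j) = 0
  dual : ∀ η : ι → ℝ, (∀ i, |η i| ≤ 1) → InDual B N (∑ i, η i • b i)

/-- Every `w` in the dual ball with `⟪a, w⟫ = 1` for an extreme point `a` expands along a frame through `a`,
with coefficients in `(0, 1]` and coefficient `1` at `a`. -/
def Expands (B : Matrix (Fin n) (Fin n) ℝ) (N : (Fin n → ℝ) → ℝ) : Prop :=
  ∀ w a, a ∈ extPts N → InDual B N w → ip B a w = 1 →
    ∃ (k : ℕ) (b : Fin (k + 1) → Fin n → ℝ) (δ : Fin (k + 1) → ℝ),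
      b 0 = a ∧ Frame B N b ∧ (∀ i, 0 < δ i) ∧ (∀ i, δ i ≤ 1) ∧ δ 0 = 1 ∧ w = ∑ i, δ i • b i

section

variable {ι κ : Type} [Fintype ι] [Fintype κ] {b : ι → Fin n → ℝ}

theorem InDual.le_one (hB : B.PosDef) {w a : Fin n → ℝ} (h : InDual B N w)
    (ha : a ∈ extPts N) : ip B a w ≤ 1 := by
  rw [ip_comm hB]
  exact (h a).trans ha.1

theorem Frame.coef (hb : Frame B N b) (δ : ι → ℝ) (i : ι) :
    ip B (b i) (∑ j, δ j • b j) = δ i := by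
  classical
  rw [ip_sum_right, Finset.sum_eq_single i]
  · rw [ip_smul_right, hb.self, mul_one]
  · intro j _ hj
    rw [ip_smul_right, hb.orth i j hj.symm, mul_zero]
  · simp

theorem Frame.coef_sum (hb : Frame B N b) (i : ι) : ip B (b i) (∑ j, b j) = 1 := by
  simpa using hb.coef (fun _ => 1) i

theorem Frame.dual_sum (hb : Frame B N b) : InDual B N (∑ j, b j) := by
  simpa using hb.dual (fun _ => 1) (by simp)

theorem Frame.comp (hb : Frame B N b) {f : κ → ι} (hf : Function.Injective f) :
    Frame B N (b ∘ f) where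
  mem i := hb.mem _
  self i := hb.self _
  orth i j hij := hb.orth _ _ (hf.ne hij)
  dual η hη := by
    classical
    have h := hb.dual (Function.extend f η 0) (fun i => by
      by_cases hi : ∃ j, f j = i
      · obtain ⟨j, rfl⟩ := hi
        rw [hf.extend_apply]
        exact hη j
      · rw [Function.extend_apply' _ _ _ hi]
        simp)
    rwa [← Fintype.sum_of_injective f hf (fun i => η i • (b ∘ f) i)] at h
    · intro i hi
      rw [Function.extend_apply' _ _ _ hi]
      simp
    · intro i
      simp [hf.extend_apply]

/-- If an extreme point `a` pairs to `1` with a frame combination, moving the coefficient at `i`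
within `[-1, 1]` cannot raise this pairing; hence `a ⟂ b i` when that coefficient is interior. -/
theorem Frame.orth_of_coef_lt (hB : B.PosDef) (hb : Frame B N b) {δ : ι → ℝ}
    (h0 : ∀ i, 0 ≤ δ i) (h1 : ∀ i, δ i ≤ 1) {a : Fin n → ℝ} (ha : a ∈ extPts N)
    (hpair : ip B a (∑ i, δ i • b i) = 1) {i : ι} (hi : δ i < 1) : ip B a (b i) = 0 := by
  classical
  have key : ∀ t : ℝ, |t| ≤ 1 → (t - δ i) * ip B a (b i) ≤ 0 := by
    intro t ht
    have h := (hb.dual (fun j => δ j + if j = i then t - δ i else 0) (fun j => by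
      split_ifs with hj
      · subst hj
        simpa using ht
      · rw [add_zero, abs_of_nonneg (h0 j)]
        exact h1 j)).le_one hB ha
    simp only [add_smul, Finset.sum_add_distrib, ite_smul, zero_smul, Finset.sum_ite_eq',
      Finset.mem_univ, if_true, ip_add_right, hpair, ip_smul_right] at h
    linarith
  have k1 := key 1 (by simp)
  have k2 := key (-1) (by simp)
  have := h0 i
  nlinarith

end

/-- The coefficient of a peaking extreme point can be moved anywhere in `[-1, 1]`. -/
theorem Expands.flip_one (H : Expands B N) {w a : Fin n → ℝ} (ha : a ∈ extPts N)
    (haa : ip B a a = 1) (hd : InDual B N (a + w)) (how : ip B a w = 0) {t : ℝ}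
    (ht : |t| ≤ 1) : InDual B N (t • a + w) := by
  obtain ⟨k, b, δ, rfl, hb, hpos, hle, h0, hw⟩ := H _ a ha hd (by rw [ip_add_right, haa, how, add_zero])
  have h := hb.dual (fun j => δ j + if j = 0 then t - 1 else 0) (fun j => by
    split_ifs with hj
    · subst hj
      simpa [h0] using ht
    · rw [add_zero, abs_of_pos (hpos j)]
      exact hle j)
  simp only [add_smul, Finset.sum_add_distrib, ite_smul, zero_smul, Finset.sum_ite_eq',
    Finset.mem_univ, if_true, ← hw] at h
  convert h using 1
  module

theorem Expands.flip (H : Expands B N) {ι : Type} [Fintype ι] {a : ι → Fin n → ℝ}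
    (hf : Frame B N a) {v : Fin n → ℝ} (hv : ∀ i, ip B (a i) v = 0)
    (hd : InDual B N (∑ i, a i + v)) {η : ι → ℝ} (hη : ∀ i, |η i| ≤ 1) :
    InDual B N (∑ i, η i • a i + v) := by
  classical
  have key : ∀ s : Finset ι,
      InDual B N (∑ i, (if i ∈ s then η i else 1) • a i + v) := by
    intro s
    induction s using Finset.induction_on with
    | empty => simpa using hd
    | insert j s hj ih =>
      have h := H.flip_one (w := ∑ i, (if i ∈ s then η i else 1) • a i + v - a j)
        (hf.mem j) (hf.self j) (by simpa using ih)
        (by rw [ip_sub_right, ip_add_right, hf.coef, hf.self, hv]; simp [hj]) (hη j)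
      convert h using 1
      have e : ∀ i, (if i ∈ insert j s then η i else 1) • a i
          = (if i ∈ s then η i else 1) • a i + if i = j then (η j - 1) • a j else 0 := by
        intro i
        by_cases hij : i = j
        · subst hij
          simp only [Finset.mem_insert_self, if_true, hj, if_false]
          module
        · simp [Finset.mem_insert, hij]
      simp only [e, Finset.sum_add_distrib, Finset.sum_ite_eq', Finset.mem_univ, if_true]
      module
  simpa using key Finset.univ

/-- Removing a peaking extreme point from a frame sum leaves a frame sum: by
`Frame.orth_of_coef_lt`, no coefficient of the expansion through that point can be below `1`. -/
theorem Expands.peel (hB : B.PosDef) (H : Expands B N) {k : ℕ} {b : Fin k → Fin n → ℝ}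
    (hb : Frame B N b) {a : Fin n → ℝ} (ha : a ∈ extPts N) (hpair : ip B a (∑ i, b i) = 1) :
    ∃ (l : ℕ) (c : Fin l → Fin n → ℝ), Frame B N c ∧ ∑ i, b i - a = ∑ i, c i := by
  obtain ⟨l, c, δ, rfl, hc, hpos, hle, h0, hw⟩ := H _ a ha hb.dual_sum hpair
  have hone : ∀ i, δ i = 1 := by
    intro i
    by_contra hne
    have hlt : δ i < 1 := lt_of_le_of_ne (hle i) hne
    have hz : ip B (∑ j, b j) (c i) = 0 := by
      rw [ip_sum_left]
      refine Finset.sum_eq_zero fun j _ => ?_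
      refine hc.orth_of_coef_lt hB (fun i => (hpos i).le) hle (hb.mem j) ?_ hlt
      rw [← hw, hb.coef_sum]
    rw [ip_comm hB, hw, hc.coef] at hz
    exact (hpos i).ne' hz
  refine ⟨l, c ∘ Fin.succ, hc.comp (Fin.succ_injective l), ?_⟩
  rw [hw, Fin.sum_univ_succ]
  simp [hone]

theorem Expands.peel_frame (hB : B.PosDef) (H : Expands B N) {ι : Type} [Fintype ι] {k : ℕ}
    {b : Fin k → Fin n → ℝ} (hb : Frame B N b) {a : ι → Fin n → ℝ} (hf : Frame B N a)
    (hpair : ∀ i, ip B (a i) (∑ i, b i) = 1) :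
    ∃ (l : ℕ) (c : Fin l → Fin n → ℝ), Frame B N c ∧ ∑ i, b i - ∑ i, a i = ∑ i, c i := by
  classical
  have key : ∀ s : Finset ι, ∃ (l : ℕ) (c : Fin l → Fin n → ℝ),
      Frame B N c ∧ ∑ i, b i - ∑ i ∈ s, a i = ∑ i, c i := by
    intro s
    induction s using Finset.induction_on with
    | empty => exact ⟨k, b, hb, by simp⟩
    | insert j s hj ih =>
      obtain ⟨l, c, hc, he⟩ := ih
      obtain ⟨l', c', hc', he'⟩ := H.peel hB hc (hf.mem j) (by
        rw [← he, ip_sub_right, hpair, ip_sum_right, Finset.sum_eq_zero, sub_zero]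
        intro i hi
        exact hf.orth j i (by rintro rfl; exact hj hi))
      refine ⟨l', c', hc', ?_⟩
      rw [← he', ← he, Finset.sum_insert hj]
      abel
  exact key Finset.univ

/-- If a short multiple `s⁻¹ • v` of a dual vector `v ⟂ a i` can be added to the frame sum
`∑ a i` without leaving the dual ball, then so can `v` itself. -/
theorem Expands.extend (hB : B.PosDef) (H : Expands B N) {k : ℕ}
    {a : Fin k → Fin n → ℝ} (hf : Frame B N a) {v : Fin n → ℝ} {s : ℝ} (hs : 1 < s)
    (hv : ∀ i, ip B (a i) v = 0) (hdv : InDual B N v)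
    (hd : InDual B N (∑ i, a i + s⁻¹ • v)) : InDual B N (∑ i, a i + v) := by
  classical
  have hs0 : 0 < s := by linarith
  rcases k with _ | k
  · simpa using hdv
  have hau : ∀ i, ip B (a i) (∑ i, a i + s⁻¹ • v) = 1 := by
    intro i
    rw [ip_add_right, hf.coef_sum, ip_smul_right, hv, mul_zero, add_zero]
  obtain ⟨l, b, δ, -, hb, hpos, hle, -, hw⟩ := H _ (a 0) (hf.mem 0) hd (hau 0)
  -- `E` collects the terms of the expansion whose coefficient is exactly `1`.
  set E : Fin n → ℝ := ∑ j, (if δ j = 1 then (1 : ℝ) else 0) • b j with hE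
  have hEsub : ∃ (q : ℕ) (b' : Fin q → Fin n → ℝ), Frame B N b' ∧ E = ∑ i, b' i := by
    let φ := (Fintype.equivFin {j // δ j = 1}).symm
    have hinj : Function.Injective fun i => (φ i).1 :=
      Subtype.val_injective.comp φ.injective
    refine ⟨_, b ∘ fun i => (φ i).1, hb.comp hinj, ?_⟩
    rw [hE]
    symm
    refine Fintype.sum_of_injective _ hinj _ _ ?_ ?_
    · intro j hj
      have : δ j ≠ 1 := fun h => hj ⟨φ.symm ⟨j, h⟩, by simp⟩
      simp [this]
    · intro i
      simp [(φ i).2]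
  obtain ⟨q, b', hb', hEb'⟩ := hEsub
  -- An extreme point orthogonal to all `b j` with `δ j < 1` does not distinguish `E` from `w`.
  have hEw : ∀ c : Fin n → ℝ, (∀ j, δ j < 1 → ip B c (b j) = 0) →
      ip B c (∑ i, a i + s⁻¹ • v) = ip B c E := by
    intro c hc
    rw [hw, hE, ip_sum_right, ip_sum_right]
    refine Finset.sum_congr rfl fun j _ => ?_
    by_cases hj : δ j = 1
    · simp [hj]
    · rw [ip_smul_right, ip_smul_right, hc j (lt_of_le_of_ne (hle j) hj)]
      simp
  have haE : ∀ i, ip B (a i) E = 1 := by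
    intro i
    rw [← hEw, hau]
    intro j hj
    exact hb.orth_of_coef_lt hB (fun i => (hpos i).le) hle (hf.mem i) (by rw [← hw, hau]) hj
  obtain ⟨r, c, hc, hD⟩ := H.peel_frame hB hb' hf (by rw [← hEb']; exact haE)
  rw [← hEb'] at hD
  have hED : E = ∑ i, a i + ∑ i, c i := by rw [← hD]; abel
  have haD : ∀ i, ip B (a i) (∑ i, c i) = 0 := by
    intro i
    rw [← hD, ip_sub_right, haE, hf.coef_sum, sub_self]
  have hdE : InDual B N (∑ i, a i + ∑ i, c i) := by
    rw [← hED, hEb']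
    exact hb'.dual_sum
  have hdE' := H.flip hf haD hdE (η := fun _ => -1) (by simp)
  -- The frame `c` of `E - ∑ a i` is empty: its members would pair to `1` with `s⁻¹ • v`.
  have hr : ∀ i : Fin r, False := by
    intro i
    have h1 := hdE.le_one hB (hc.mem i)
    have h2 := hdE'.le_one hB (hc.mem i)
    simp only [neg_smul, one_smul, Finset.sum_neg_distrib] at h2
    rw [ip_add_right, hc.coef_sum] at h1 h2
    rw [ip_neg_right] at h2
    have h3 : ip B (c i) (∑ i, a i) = 0 := by linarith
    have h4 : ip B (c i) E = 1 := by rw [hED, ip_add_right, h3, hc.coef_sum, zero_add]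
    have h5 := hEw (c i) fun j hj =>
      hb.orth_of_coef_lt hB (δ := fun j => if δ j = 1 then (1 : ℝ) else 0)
        (fun j => by split_ifs <;> norm_num)
        (fun j => by split_ifs <;> norm_num) (hc.mem i) h4
        (by simp [hj.ne])
    rw [ip_add_right, h3, h4, ip_smul_right, zero_add] at h5
    have h6 := hdv.le_one hB (hc.mem i)
    have h7 : s⁻¹ < 1 := inv_lt_one_of_one_lt₀ hs
    have h8 : 0 < s⁻¹ := inv_pos.2 hs0
    nlinarith
  have hEe : E = ∑ i, a i := by
    rw [hED]
    have : ∑ i, c i = 0 := Finset.sum_eq_zero fun i _ => (hr i).elim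
    rw [this, add_zero]
  have hv' : v = ∑ j, (if δ j = 1 then 0 else s * δ j) • b j := by
    have h1 : s⁻¹ • v = ∑ j, (δ j - if δ j = 1 then (1 : ℝ) else 0) • b j := by
      simp only [sub_smul, Finset.sum_sub_distrib]
      rw [← hw, ← hE, hEe]
      abel
    have h2 : v = s • (s⁻¹ • v) := by rw [smul_smul, mul_inv_cancel₀ hs0.ne', one_smul]
    rw [h2, h1, Finset.smul_sum]
    refine Finset.sum_congr rfl fun j _ => ?_
    rw [smul_smul]
    congr 1
    split_ifs with hj
    · simp [hj]
    · ring
  have hcoef : ∀ j, δ j ≠ 1 → s * δ j ≤ 1 := by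
    intro j hj
    have h1 := hdv.le_one hB (hb.mem j)
    rw [hv', hb.coef, if_neg hj] at h1
    exact h1
  have hfin := hb.dual (fun j => if δ j = 1 then 1 else s * δ j) (fun j => by
    split_ifs with hj
    · simp
    · rw [abs_of_pos (mul_pos hs0 (hpos j))]
      exact hcoef j hj)
  convert hfin using 1
  rw [← hEe, hE, hv', ← Finset.sum_add_distrib]
  refine Finset.sum_congr rfl fun j _ => ?_
  rw [← add_smul]
  congr 1
  split_ifs <;> simp

end Frames

section Decomposition

variable {B : Matrix (Fin n) (Fin n) ℝ} {N : (Fin n → ℝ) → ℝ}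

/-! ### The subdifferential at a represented point -/

/-- `x` is the positive combination of the frame `a` with weights `γ`, and `N x = ∑ γ i`. -/
structure Rep (B : Matrix (Fin n) (Fin n) ℝ) (N : (Fin n → ℝ) → ℝ) (x : Fin n → ℝ) {k : ℕ}
    (a : Fin k → Fin n → ℝ) (γ : Fin k → ℝ) : Prop where
  frame : Frame B N a
  pos : ∀ i, 0 < γ i
  eq : x = ∑ i, γ i • a i
  norm_eq : N x = ∑ i, γ i

variable {x : Fin n → ℝ} {k : ℕ} {a : Fin k → Fin n → ℝ} {γ : Fin k → ℝ}

theorem Rep.pair_sum (h : Rep B N x a γ) : ip B (∑ i, a i) x = N x := by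
  rw [ip_sum_left, h.norm_eq]
  refine Finset.sum_congr rfl fun i _ => ?_
  rw [h.eq, h.frame.coef]

/-- A subgradient at `x` pairs to `1` with every frame member: each pairing is at most `1`, and
their weighted average with the positive weights `γ` is `1`. -/
theorem Rep.pair_eq_one (hB : B.PosDef) (h : Rep B N x a γ) {z : Fin n → ℝ}
    (hz : InDual B N z) (hzx : ip B z x = N x) (i : Fin k) : ip B (a i) z = 1 := by
  have hsum : ∑ i, γ i * (1 - ip B (a i) z) = 0 := by
    have h1 : ip B z x = ∑ i, γ i * ip B (a i) z := by
      rw [h.eq, ip_sum_right]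
      refine Finset.sum_congr rfl fun i _ => ?_
      rw [ip_smul_right, ip_comm hB]
    rw [h.norm_eq, h1] at hzx
    simp only [mul_sub, mul_one, Finset.sum_sub_distrib]
    linarith
  have hnn : ∀ i ∈ Finset.univ, 0 ≤ γ i * (1 - ip B (a i) z) := fun i _ =>
    mul_nonneg (h.pos i).le (sub_nonneg.2 (hz.le_one hB (h.frame.mem i)))
  have h0 := (Finset.sum_eq_zero_iff_of_nonneg hnn).1 hsum i (Finset.mem_univ i)
  have := (mul_eq_zero.1 h0).resolve_left (h.pos i).ne'
  linarith

/-- Two representations of `x` have the same frame sum: writing `e`, `e'` for the sums, of `k` and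
`k'` terms, one has `⟪e, e'⟫ = k = k'`, so `‖e - e'‖ᵤ² = 0`. -/
theorem Rep.sum_unique (hB : B.PosDef) (h : Rep B N x a γ) {k' : ℕ} {a' : Fin k' → Fin n → ℝ}
    {γ' : Fin k' → ℝ} (h' : Rep B N x a' γ') : ∑ i, a i = ∑ i, a' i := by
  have h1 : ip B (∑ i, a i) (∑ i, a' i) = k := by
    rw [ip_sum_left]
    simp [h.pair_eq_one hB h'.frame.dual_sum h'.pair_sum]
  have h2 : ip B (∑ i, a' i) (∑ i, a i) = k' := by
    rw [ip_sum_left]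
    simp [h'.pair_eq_one hB h.frame.dual_sum h.pair_sum]
  have h3 : ip B (∑ i, a i) (∑ i, a i) = k := by
    rw [ip_sum_left]
    simp [h.frame.coef_sum]
  have h4 : ip B (∑ i, a' i) (∑ i, a' i) = k' := by
    rw [ip_sum_left]
    simp [h'.frame.coef_sum]
  refine sub_eq_zero.1 (eq_zero_of_ip_self hB ?_)
  rw [ip_sub_left, ip_sub_right, ip_sub_right]
  linarith

theorem InDual.convex {v w : Fin n → ℝ} (hv : InDual B N v) (hw : InDual B N w) {s t : ℝ}
    (hs : 0 ≤ s) (ht : 0 ≤ t) (hst : s + t = 1) : InDual B N (s • v + t • w) := by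
  intro y
  rw [ip_add_left, ip_smul_left, ip_smul_left]
  calc s * ip B v y + t * ip B w y ≤ s * N y + t * N y :=
        add_le_add (mul_le_mul_of_nonneg_left (hv y) hs) (mul_le_mul_of_nonneg_left (hw y) ht)
    _ = N y := by rw [← add_mul, hst, one_mul]

/-- The set `∂N(x) - ∑ a i` is closed under scaling by `[-1, 1]`. -/
theorem Rep.scale (hN : IsNorm N) (H : Expands B N) (h : Rep B N x a γ) {v : Fin n → ℝ}
    (hv : ∀ i, ip B (a i) v = 0) (hd : InDual B N (∑ i, a i + v)) {t : ℝ} (ht : |t| ≤ 1) :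
    InDual B N (∑ i, a i + t • v) := by
  have hneg : InDual B N (∑ i, a i + (-1 : ℝ) • v) := by
    have h1 := H.flip h.frame hv hd (η := fun _ => -1) (by simp)
    intro y
    have h2 := h1 (-y)
    have h3 : N (-y) = N y := by simpa using hN.smul_eq (-1) y
    rw [h3, ip_neg_right, ← ip_neg_left] at h2
    convert h2 using 2
    simp only [neg_smul, one_smul, Finset.sum_neg_distrib]
    abel
  obtain ⟨h1, h2⟩ := abs_le.1 ht
  have hc := hd.convex hneg (s := (1 + t) / 2) (t := (1 - t) / 2) (by linarith) (by linarith)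
    (by ring)
  convert hc using 1
  module

/-- The span of `∂N(x) - ∑ a i`. As that set is convex and symmetric, the span is the set of
its multiples, and the multiple can be taken larger than `1`. -/
def spanSub (hN : IsNorm N) (H : Expands B N) (h : Rep B N x a γ) :
    Submodule ℝ (Fin n → ℝ) where
  carrier := {v | (∀ i, ip B (a i) v = 0) ∧ ∃ s : ℝ, 1 < s ∧ InDual B N (∑ i, a i + s⁻¹ • v)}
  zero_mem' := ⟨fun i => ip_zero_right _, 2, by norm_num, by simpa using h.frame.dual_sum⟩
  add_mem' := by
    rintro v w ⟨hv, s, hs, hds⟩ ⟨hw, t, ht, hdt⟩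
    refine ⟨fun i => by rw [ip_add_right, hv, hw, add_zero], s + t, by linarith, ?_⟩
    have hst : 0 < s + t := by linarith
    have hs0 : s ≠ 0 := by linarith
    have ht0 : t ≠ 0 := by linarith
    have hc := hds.convex hdt (s := s / (s + t)) (t := t / (s + t))
      (by positivity) (by positivity) (by field_simp)
    convert hc using 1
    have e1 : (s + t)⁻¹ = s / (s + t) * s⁻¹ := by field_simp
    have e2 : (s + t)⁻¹ = t / (s + t) * t⁻¹ := by field_simp
    have e3 : ∑ i, a i = (s / (s + t)) • ∑ i, a i + (t / (s + t)) • ∑ i, a i := by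
      rw [← add_smul, ← add_div, div_self hst.ne', one_smul]
    rw [smul_add, smul_add, smul_add, smul_smul, smul_smul, ← e1, ← e2]
    nth_rewrite 1 [e3]
    abel
  smul_mem' := by
    rintro c v ⟨hv, s, hs, hds⟩
    refine ⟨fun i => by rw [ip_smul_right, hv, mul_zero], s * (|c| + 1),
      by nlinarith [abs_nonneg c], ?_⟩
    have hc : 0 < |c| + 1 := by positivity
    have hs0 : s ≠ 0 := by linarith
    have h1 := h.scale hN H (v := s⁻¹ • v) (fun i => by rw [ip_smul_right, hv, mul_zero]) hds
      (t := c / (|c| + 1)) (by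
        rw [abs_div, abs_of_pos hc, div_le_one hc]
        linarith)
    convert h1 using 2
    rw [smul_smul, smul_smul]
    congr 1
    field_simp

/-- With `e = ∑ a i` and `T` the orthogonal complement of the span of `∂N(x) - e`, the
subdifferential at `x` has the required form. -/
theorem Rep.decomp (hB : B.PosDef) (hN : IsNorm N) (H : Expands B N) (h : Rep B N x a γ) :
    ∃ T : Submodule ℝ (Fin n → ℝ), ∑ i, a i ∈ T ∧ subdiff B N x =
      {ξ | ∃ v ∈ perp B T, dualNorm B N v ≤ 1 ∧ ξ = ∑ i, a i + v} := by
  set P : LinearMap.BilinForm ℝ (Fin n → ℝ) := Matrix.toBilin' B with hP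
  have hPip : ∀ u v, P u v = ip B u v := fun u v => by simp [hP, Matrix.toBilin'_apply', ip]
  have hrefl : P.IsRefl := fun u v huv => by
    rw [hPip] at huv ⊢
    rw [ip_comm hB, huv]
  have hnd : P.Nondegenerate := by
    constructor
    · intro u hu
      exact eq_zero_of_ip_self hB (by rw [← hPip]; exact hu u)
    · intro u hu
      exact eq_zero_of_ip_self hB (by rw [← hPip]; exact hu u)
  set W := spanSub hN H h with hW
  have hperp : ∀ v, v ∈ perp B (P.orthogonal W) ↔ v ∈ W := by
    intro v
    conv_rhs => rw [← LinearMap.BilinForm.orthogonal_orthogonal hnd hrefl W]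
    simp only [perp, Set.mem_ofPred_eq, LinearMap.BilinForm.mem_orthogonal_iff,
      hPip]
  refine ⟨P.orthogonal W, ?_, ?_⟩
  · rw [LinearMap.BilinForm.mem_orthogonal_iff]
    intro v hv
    rw [hPip, ip_sum_right]
    refine Finset.sum_eq_zero fun i _ => ?_
    rw [ip_comm hB]
    exact hv.1 i
  · ext ξ
    rw [mem_subdiff_iff hN]
    simp only [Set.mem_ofPred_eq, hperp, dualNorm_le_one_iff hN]
    constructor
    · rintro ⟨hd, hx⟩
      have hv : ∀ i, ip B (a i) (ξ - ∑ i, a i) = 0 := fun i => by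
        rw [ip_sub_right, h.pair_eq_one hB hd hx, h.frame.coef_sum, sub_self]
      have hd' : InDual B N (∑ i, a i + (ξ - ∑ i, a i)) := by
        rwa [add_sub_cancel]
      refine ⟨ξ - ∑ i, a i, ⟨hv, 2, by norm_num, ?_⟩, ?_, by abel⟩
      · exact h.scale hN H hv hd' (by rw [abs_of_pos] <;> norm_num)
      · simpa using H.flip h.frame hv hd' (η := fun _ => 0) (by simp)
    · rintro ⟨v, ⟨hv, s, hs, hds⟩, hdv, rfl⟩
      refine ⟨H.extend hB h.frame hs hv hdv hds, ?_⟩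
      have h0 : ip B v x = 0 := by
        rw [h.eq, ip_sum_right]
        refine Finset.sum_eq_zero fun i _ => ?_
        rw [ip_smul_right, ip_comm hB, hv, mul_zero]
      rw [ip_add_left, h.pair_sum, h0, add_zero]

end Decomposition

/-- **Orthogonal representation, sufficiency.**
If every extreme point of the unit ball of `N` has unit `‖·‖ᵤ`-norm, and every nonzero `x`
together with every maximizer `a₁` of `⟪a, x⟫` over the extreme points admits an orthogonal
representation satisfying (I) and (II), then `N` is decomposable, and for any `x` with such
a representation one has `e x = ∑ i, a i`. -/
theorem orthogonal_representation_sufficiency {n : ℕ}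
    (B : Matrix (Fin n) (Fin n) ℝ) (hB : B.PosDef)
    (N : (Fin n → ℝ) → ℝ) (hN : IsNorm N)
    (hExt : ∀ a ∈ extPts N, normu B a = 1)
    (hRep : ∀ x : Fin n → ℝ, x ≠ 0 →
      ∀ a₁ ∈ extPts N, (∀ a ∈ extPts N, ip B a x ≤ ip B a₁ x) →
        ∃ (k : ℕ) (a : Fin (k + 1) → Fin n → ℝ) (γ : Fin (k + 1) → ℝ),
          a 0 = a₁ ∧ (∀ i, a i ∈ extPts N) ∧
          (∀ i j, i ≠ j → ip B (a i) (a j) = 0) ∧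
          (∀ i, 0 < γ i) ∧ x = ∑ i, γ i • a i ∧ N x = ∑ i, γ i ∧
          (∀ η : Fin (k + 1) → ℝ, (∀ i, |η i| ≤ 1) →
            dualNorm B N (∑ i, η i • a i) ≤ 1)) :
    ∃ D : DecompStruct B N,
      ∀ (x : Fin n → ℝ) (k : ℕ) (a : Fin k → Fin n → ℝ) (γ : Fin k → ℝ),
        (∀ i, a i ∈ extPts N) →
        (∀ i j, i ≠ j → ip B (a i) (a j) = 0) →
        (∀ i, 0 < γ i) → x = ∑ i, γ i • a i → N x = ∑ i, γ i →
        (∀ η : Fin k → ℝ, (∀ i, |η i| ≤ 1) → dualNorm B N (∑ i, η i • a i) ≤ 1) →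
        D.e x = ∑ i, a i := by
  have hself : ∀ a ∈ extPts N, ip B a a = 1 := fun a ha => Real.sqrt_eq_one.1 (hExt a ha)
  have mkFrame : ∀ {k : ℕ} {a : Fin k → Fin n → ℝ}, (∀ i, a i ∈ extPts N) →
      (∀ i j, i ≠ j → ip B (a i) (a j) = 0) →
      (∀ η : Fin k → ℝ, (∀ i, |η i| ≤ 1) → dualNorm B N (∑ i, η i • a i) ≤ 1) →
      Frame B N a := fun hm ho hd =>
    ⟨hm, fun i => hself _ (hm i), ho, fun η hη => (dualNorm_le_one_iff hN _).1 (hd η hη)⟩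
  have H : Expands B N := by
    intro w a ha hw haw
    have hw0 : w ≠ 0 := by
      rintro rfl
      rw [ip_zero_right] at haw
      exact zero_ne_one haw
    obtain ⟨k, b, γ, hb0, hm, ho, hpos, heq, -, hd⟩ :=
      hRep w hw0 a ha fun a' ha' => (hw.le_one hB ha').trans haw.ge
    have hb := mkFrame hm ho hd
    have hc : ∀ i, γ i = ip B (b i) w := fun i => by rw [heq, hb.coef]
    refine ⟨k, b, γ, hb0, hb, hpos, fun i => ?_, ?_, heq⟩
    · rw [hc]
      exact hw.le_one hB (hm i)
    · rw [hc, hb0, haw]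
  have hrep : ∀ x, ∃ (k : ℕ) (a : Fin k → Fin n → ℝ) (γ : Fin k → ℝ), Rep B N x a γ := by
    intro x
    by_cases hx : x = 0
    · -- The zero vector is represented by the empty frame.
      refine ⟨0, 0, 0, ⟨fun i => i.elim0, fun i => i.elim0, fun i => i.elim0, fun η _ y => ?_⟩,
        fun i => i.elim0, by simp [hx], by simp [hx, hN.zero]⟩
      simpa [ip_zero_left] using hN.nonneg y
    · obtain ⟨a₁, ha₁, hmax⟩ := exists_extPts_max hB hN x
      obtain ⟨k, a, γ, -, hm, ho, hpos, heq, hNx, hd⟩ :=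
        hRep x hx a₁ ha₁ fun a' ha' => hmax a' ha'.1
      exact ⟨k + 1, a, γ, mkFrame hm ho hd, hpos, heq, hNx⟩
  choose K A Γ hA using hrep
  choose T hT hsub using fun x => (hA x).decomp hB hN H
  refine ⟨⟨T, fun x => ∑ i, A x i, hT, hsub⟩, ?_⟩
  intro x k a γ hm ho hpos heq hNx hd
  exact (hA x).sum_unique hB ⟨mkFrame hm ho hd, hpos, heq, hNx⟩

end PGH
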